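/- Let T_1 be the tree on vertex set {1,…,8} with edges 12, 16, 23, 24, 25, 67, 68, and let T_2 be the tree on vertex set {1,…,8} with edges 12, 14, 15, 16, 23, 57, 68. Then T_1 and T_2 are incomparable with respect to ⪯: neither T_1 ⪯ T_2 nor T_2 ⪯ T_1 holds. -/

import Mathlib

/-!
Deleting a vertex `v` gives `I(G) = I(G - v) + x I(G - N[v])`. At a vertex of degree four this
leaves disjoint unions of stars and isolated vertices, so that
`I(T₁) = (1 + x)³ ((1 + x)³ + x) + x ((1 + x)² + x)` and
`I(T₂) = (1 + x) (1 + 2x)³ + x (1 + x)³`.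
Their difference `I(T₁) - I(T₂) = x³ (1 + 7x + 6x² + x³)` is negative at `-1/10` and positive
at `-1/5`. All Taylor coefficients of `I(T₂)` at `-1/10` and of `I(T₁)` at `-1/5` are positive, so
`ξ(T₂) ≤ -1/10` and `ξ(T₁) ≤ -1/5`, and each comparison fails at one of these two points.
-/

open Polynomial SimpleGraph

/-- A finset of vertices is independent: pairwise nonadjacent. -/
def IsIndepFinset {V : Type*} (G : SimpleGraph V) (s : Finset V) : Prop :=
  ∀ u ∈ s, ∀ v ∈ s, ¬ G.Adj u v

open Classical in
/-- The independence polynomial of a finite graph, with real coefficients. -/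
noncomputable def indepPoly {V : Type*} [Fintype V] (G : SimpleGraph V) : Polynomial ℝ :=
  ∑ s : Finset V, if IsIndepFinset G s then (X : Polynomial ℝ) ^ s.card else 0

/-- `xi G` : the largest real root of the independence polynomial of `G`. -/
noncomputable def xi {V : Type*} [Fintype V] (G : SimpleGraph V) : ℝ :=
  sSup {x : ℝ | (indepPoly G).eval x = 0}

/-- `Pre H G` (`H ⪯ G`) : `I(H,x) ≥ I(G,x)` for all `x ∈ [ξ(G), 0]`. -/
def Pre {V W : Type*} [Fintype V] [Fintype W] (H : SimpleGraph W) (G : SimpleGraph V) : Prop :=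
  ∀ x ∈ Set.Icc (xi G) 0, (indepPoly G).eval x ≤ (indepPoly H).eval x

/-- `SPre H G` (`H ≺ G`). -/
def SPre {V W : Type*} [Fintype V] [Fintype W] (H : SimpleGraph W) (G : SimpleGraph V) : Prop :=
  Pre H G ∧ indepPoly H ≠ indepPoly G

open Classical in
/-- A graph is well-covered if all maximal independent sets have the same size. -/
def WellCovered {V : Type*} (G : SimpleGraph V) : Prop :=
  ∀ s t : Finset V,
    IsIndepFinset G s → (∀ v ∉ s, ¬ IsIndepFinset G (insert v s)) →
    IsIndepFinset G t → (∀ v ∉ t, ¬ IsIndepFinset G (insert v t)) →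
    s.card = t.card

/-- A connected unicyclic graph: connected with as many edges as vertices. -/
def Unicyclic {V : Type*} [Fintype V] (G : SimpleGraph V) : Prop :=
  G.Connected ∧ G.edgeSet.ncard = Fintype.card V

/-- The graph star (corona with `K₁`) of `G`: each vertex `inl v` gets a pendant
vertex `inr v`. -/
def corona {V : Type*} (G : SimpleGraph V) : SimpleGraph (V ⊕ V) :=
  SimpleGraph.fromRel (fun a b =>
    match a, b with
    | Sum.inl u, Sum.inl v => G.Adj u v
    | Sum.inl u, Sum.inr v => u = v
    | _, _ => False)

/-- `Ugraph n` (`U_n`, `n ≥ 3`): a triangle `0,1,2` with `n - 3` pendant vertices attached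
to vertex `0`. -/
def Ugraph (n : ℕ) : SimpleGraph (Fin n) :=
  SimpleGraph.fromRel (fun i j => i.val = 0 ∨ (i.val = 1 ∧ j.val = 2))

/-- `Dgraph n` (`D_n`, `n ≥ 4`): a path `0,1,...,n-1` plus the chord `{0,2}`, i.e. a
triangle with a path on `n - 3` vertices attached. -/
def Dgraph (n : ℕ) : SimpleGraph (Fin n) :=
  SimpleGraph.fromRel (fun i j => j.val = i.val + 1 ∨ (i.val = 0 ∧ j.val = 2))

/-- `starGraph n` (`S_n = K_{1,n-1}`): vertex `0` adjacent to all other vertices. -/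
def starGraph (n : ℕ) : SimpleGraph (Fin n) :=
  SimpleGraph.fromRel (fun i _ => i.val = 0)

/-- `Mgraph n` (`M_n`, odd `n ≥ 5`): a triangle `0,1,2` with `(n-3)/2` paths of length two
attached at vertex `0`; the middle vertices are the odd indices `3,5,...,n-2` and the leaf
attached to middle vertex `i` is `i + 1`. -/
def Mgraph (n : ℕ) : SimpleGraph (Fin n) :=
  SimpleGraph.fromRel (fun i j =>
    (i.val = 0 ∧ (j.val ≤ 2 ∨ j.val % 2 = 1)) ∨ (i.val = 1 ∧ j.val = 2) ∨
    (i.val % 2 = 1 ∧ 3 ≤ i.val ∧ j.val = i.val + 1))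

/-- `SPgraph g k ℓ` (`G(g,k,ℓ)`, for `g ∈ {3,5}` and `k + ℓ ≥ 1`): a cycle on the vertices
`0,...,g-1`, a copy of `P_k*` on the vertices `g,...,g+2k-1` (path vertices at even offsets,
each followed by its pendant vertex) joined to the cycle vertex `0` by an edge to the
path end `g`, and a copy of `P_ℓ*` on the vertices `g+2k,...,g+2k+2ℓ-1` joined to the cycle
vertex `2` by an edge to the path end `g+2k`. -/
def SPgraph (g k ℓ : ℕ) : SimpleGraph (Fin (g + 2*k + 2*ℓ)) :=
  SimpleGraph.fromRel (fun i j =>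
    (i.val < g ∧ j.val < g ∧ (j.val = i.val + 1 ∨ (i.val = 0 ∧ j.val = g - 1))) ∨
    (i.val = 0 ∧ 0 < k ∧ j.val = g) ∨
    (g ≤ i.val ∧ i.val < g + 2*k ∧ (i.val - g) % 2 = 0 ∧
      (j.val = i.val + 1 ∨ (j.val = i.val + 2 ∧ j.val < g + 2*k))) ∨
    (i.val = 2 ∧ 0 < ℓ ∧ j.val = g + 2*k) ∨
    (g + 2*k ≤ i.val ∧ (i.val - (g + 2*k)) % 2 = 0 ∧
      (j.val = i.val + 1 ∨ j.val = i.val + 2)))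

/-- `Gtree n` (`G_{2n}`, `n ≥ 5`): the tree on `2n` vertices with path `v_1 … v_n` at
indices `0,…,n-1`, `z_1` at index `n`, `y_1, y_2` at `n+1, n+2`, `x_1, x_2` at `n+3, n+4`
(with `v_3 z_1`, `v_3 y_1`, `y_1 y_2`, `v_5 x_1`, `x_1 x_2` edges), and pendant vertices
`w_j` at index `n + j - 1` attached to `v_j` for `6 ≤ j ≤ n`. -/
def Gtree (n : ℕ) : SimpleGraph (Fin (2*n)) :=
  SimpleGraph.fromRel (fun a b =>
    (a.val + 1 = b.val ∧ b.val < n) ∨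
    (a.val = 2 ∧ (b.val = n ∨ b.val = n + 1)) ∨
    (a.val = n + 1 ∧ b.val = n + 2) ∨
    (a.val = 4 ∧ b.val = n + 3) ∨
    (a.val = n + 3 ∧ b.val = n + 4) ∨
    (5 ≤ a.val ∧ a.val < n ∧ b.val = n + a.val))

/-- The tree `T₁` on `{1,…,8}` (here `0`-indexed) with edges
`12, 16, 23, 24, 25, 67, 68`. -/
def T1 : SimpleGraph (Fin 8) :=
  SimpleGraph.fromRel (fun i j =>
    (i.val, j.val) ∈ ([(0,1),(0,5),(1,2),(1,3),(1,4),(5,6),(5,7)] : List (ℕ × ℕ)))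

/-- The tree `T₂` on `{1,…,8}` (here `0`-indexed) with edges
`12, 14, 15, 16, 23, 57, 68`. -/
def T2 : SimpleGraph (Fin 8) :=
  SimpleGraph.fromRel (fun i j =>
    (i.val, j.val) ∈ ([(0,1),(0,3),(0,4),(0,5),(1,2),(4,6),(5,7)] : List (ℕ × ℕ)))

section IndepPolyOn

variable {V : Type*} {G : SimpleGraph V}

open Classical in
/-- The independence polynomial of the subgraph of `G` induced by `S`. Working with finsets of
vertices of one ambient graph spares the deletion recurrence any change of vertex type. -/
noncomputable def indepPolyOn (G : SimpleGraph V) (S : Finset V) : ℝ[X] :=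
  ∑ s ∈ S.powerset, if IsIndepFinset G s then X ^ s.card else 0

lemma indepPolyOn_univ [Fintype V] : indepPolyOn G Finset.univ = indepPoly G := by
  rw [indepPolyOn, indepPoly, Finset.powerset_univ]

lemma indepPolyOn_empty : indepPolyOn G ∅ = 1 := by
  simp [indepPolyOn, IsIndepFinset]

lemma isIndepFinset_insert [DecidableEq V] {v : V} {s : Finset V} :
    IsIndepFinset G (insert v s) ↔ IsIndepFinset G s ∧ ∀ w ∈ s, ¬ G.Adj v w := by
  simp only [IsIndepFinset, Finset.forall_mem_insert, G.irrefl, G.adj_comm _ v]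
  grind

lemma indepPolyOn_insert [DecidableEq V] [DecidableRel G.Adj] {v : V} {S : Finset V}
    (hv : v ∉ S) :
    indepPolyOn G (insert v S) =
      indepPolyOn G S + X * indepPolyOn G {w ∈ S | ¬ G.Adj v w} := by
  have hpowerset : {w ∈ S | ¬ G.Adj v w}.powerset =
      {s ∈ S.powerset | ∀ w ∈ s, ¬ G.Adj v w} := by
    ext s
    simp only [Finset.mem_powerset, Finset.mem_filter, Finset.subset_iff]
    grind
  rw [indepPolyOn, Finset.sum_powerset_insert hv, indepPolyOn, indepPolyOn, hpowerset,
    Finset.sum_filter, Finset.mul_sum]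
  congr 1
  refine Finset.sum_congr rfl fun s hs => ?_
  have hvs : v ∉ s := fun h => hv (Finset.mem_powerset.mp hs h)
  rw [Finset.card_insert_of_notMem hvs, pow_succ']
  by_cases hindep : IsIndepFinset G s <;> by_cases hadj : ∀ w ∈ s, ¬ G.Adj v w <;>
    simp [isIndepFinset_insert, hindep, hadj]

lemma indepPolyOn_union [DecidableEq V] {S T : Finset V} (hdisj : Disjoint S T)
    (hadj : ∀ u ∈ S, ∀ v ∈ T, ¬ G.Adj u v) :
    indepPolyOn G (S ∪ T) = indepPolyOn G S * indepPolyOn G T := by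
  classical
  induction S using Finset.strongInduction with
  | H S ih =>
    obtain rfl | ⟨v, hvS⟩ := S.eq_empty_or_nonempty
    · rw [Finset.empty_union, indepPolyOn_empty, one_mul]
    obtain ⟨R, hvR, rfl⟩ : ∃ R, v ∉ R ∧ insert v R = S :=
      ⟨S.erase v, S.notMem_erase v, Finset.insert_erase hvS⟩
    obtain ⟨hvT, hRT⟩ := Finset.disjoint_insert_left.mp hdisj
    obtain ⟨hvadj, hRadj⟩ := (Finset.forall_mem_insert ..).mp hadj
    have ih_subset {Q : Finset V} (hQ : Q ⊆ R) :
        indepPolyOn G (Q ∪ T) = indepPolyOn G Q * indepPolyOn G T :=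
      ih Q (hQ.trans_ssubset (Finset.ssubset_insert hvR)) (hRT.mono_left hQ)
        fun u hu => hRadj u (hQ hu)
    rw [Finset.insert_union, indepPolyOn_insert (by simp [hvR, hvT]), Finset.filter_union,
      Finset.filter_true_of_mem hvadj, ih_subset subset_rfl, ih_subset (Finset.filter_subset ..),
      indepPolyOn_insert hvR]
    ring

lemma indepPolyOn_of_isIndepFinset {S : Finset V} (hS : IsIndepFinset G S) :
    indepPolyOn G S = (1 + X) ^ S.card := by
  classical
  induction S using Finset.induction_on with
  | empty => rw [indepPolyOn_empty, Finset.card_empty, pow_zero]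
  | insert v S hv ih =>
    obtain ⟨hS, hadj⟩ := isIndepFinset_insert.mp hS
    rw [indepPolyOn_insert hv, Finset.filter_true_of_mem hadj, ih hS,
      Finset.card_insert_of_notMem hv]
    ring

lemma indepPolyOn_insert_of_forall_adj [DecidableEq V] {v : V} {S : Finset V}
    (hS : IsIndepFinset G S) (hadj : ∀ w ∈ S, G.Adj v w) :
    indepPolyOn G (insert v S) = (1 + X) ^ S.card + X := by
  classical
  have hv : v ∉ S := fun h => G.irrefl (hadj v h)
  rw [indepPolyOn_insert hv, indepPolyOn_of_isIndepFinset hS,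
    Finset.filter_false_of_mem fun w hw => not_not_intro (hadj w hw), indepPolyOn_empty, mul_one]

end IndepPolyOn

section LargestRoot

variable {V W : Type*} [Fintype V] [Fintype W] {G : SimpleGraph V} {H : SimpleGraph W}

-- The point `b` provides a root: without one, `xi G` would be `sSup ∅ = 0`.
lemma xi_le_of_eval_pos {a b : ℝ} (hb : (indepPoly G).eval b ≤ 0)
    (hpos : ∀ x, a < x → 0 < (indepPoly G).eval x) : xi G ≤ a := by
  obtain ⟨r, hr⟩ : ∃ r, (indepPoly G).eval r = 0 :=
    mem_range_of_exists_le_of_exists_ge (indepPoly G).continuous ⟨b, hb⟩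
      ⟨a + 1, (hpos _ (lt_add_one a)).le⟩
  exact csSup_le ⟨r, hr⟩ fun x hx => not_lt.mp fun hax => (hpos x hax).ne' hx

lemma not_pre_of_eval_lt {x : ℝ} (hxi : xi G ≤ x) (hx : x ≤ 0)
    (hlt : (indepPoly H).eval x < (indepPoly G).eval x) : ¬ Pre H G :=
  fun h => (h x ⟨hxi, hx⟩).not_gt hlt

end LargestRoot

section Trees

instance {V : Type*} (G : SimpleGraph V) [DecidableRel G.Adj] :
    DecidablePred (IsIndepFinset G) :=
  fun s => inferInstanceAs (Decidable (∀ u ∈ s, ∀ v ∈ s, ¬ G.Adj u v))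

instance : DecidableRel T1.Adj :=
  inferInstanceAs (DecidableRel (SimpleGraph.fromRel _).Adj)

instance : DecidableRel T2.Adj :=
  inferInstanceAs (DecidableRel (SimpleGraph.fromRel _).Adj)

lemma indepPoly_T1 :
    indepPoly T1 = (1 + X) ^ 3 * ((1 + X) ^ 3 + X) + X * ((1 + X) ^ 2 + X) := by
  have huniv : (Finset.univ : Finset (Fin 8)) = insert 1 ({2, 3, 4} ∪ insert 5 {0, 6, 7}) := by
    decide
  have hnonadj : ({w ∈ {2, 3, 4} ∪ insert 5 {0, 6, 7} | ¬ T1.Adj 1 w} : Finset (Fin 8)) =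
      insert 5 {6, 7} := by
    decide
  rw [← indepPolyOn_univ, huniv, indepPolyOn_insert (by decide), hnonadj,
    indepPolyOn_union (by decide) (by decide), indepPolyOn_of_isIndepFinset (by decide),
    indepPolyOn_insert_of_forall_adj (by decide) (by decide),
    indepPolyOn_insert_of_forall_adj (by decide) (by decide)]
  rfl

lemma indepPoly_T2 :
    indepPoly T2 = (1 + X) * ((1 + X) + X) ^ 3 + X * (1 + X) ^ 3 := by
  have huniv : (Finset.univ : Finset (Fin 8)) =
      insert 0 ({3} ∪ (insert 1 {2} ∪ (insert 4 {6} ∪ insert 5 {7}))) := by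
    decide
  have hnonadj : ({w ∈ {3} ∪ (insert 1 {2} ∪ (insert 4 {6} ∪ insert 5 {7})) | ¬ T2.Adj 0 w} :
      Finset (Fin 8)) = {2, 6, 7} := by
    decide
  have hedge {v w : Fin 8} (h : T2.Adj v w) :
      indepPolyOn T2 (insert v {w}) = (1 + X) + X := by
    rw [indepPolyOn_insert_of_forall_adj (by simp [IsIndepFinset]) (by simpa using h),
      Finset.card_singleton, pow_one]
  rw [← indepPolyOn_univ, huniv, indepPolyOn_insert (by decide), hnonadj,
    indepPolyOn_union (by decide) (by decide), indepPolyOn_union (by decide) (by decide),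
    indepPolyOn_union (by decide) (by decide), hedge (by decide), hedge (by decide),
    hedge (by decide), indepPolyOn_of_isIndepFinset (S := {3}) (by decide),
    indepPolyOn_of_isIndepFinset (S := {2, 6, 7}) (by decide)]
  simp only [Finset.card_singleton, show ({2, 6, 7} : Finset (Fin 8)).card = 3 from rfl]
  ring

lemma eval_indepPoly_T1_sub_T2 (x : ℝ) :
    (indepPoly T1).eval x - (indepPoly T2).eval x = x ^ 3 * (1 + 7 * x + 6 * x ^ 2 + x ^ 3) := by
  simp only [indepPoly_T1, indepPoly_T2, eval_add, eval_mul, eval_pow, eval_one, eval_X]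
  ring

lemma eval_indepPoly_T1_pos {x : ℝ} (hx : -1 / 5 < x) : 0 < (indepPoly T1).eval x := by
  obtain ⟨y, hy, rfl⟩ : ∃ y, 0 < y ∧ x = y - 1 / 5 := ⟨x + 1 / 5, by linarith, by ring⟩
  have htaylor : (indepPoly T1).eval (y - 1 / 5) = 1121 / 15625 + 6294 / 3125 * y +
      1248 / 125 * y ^ 2 + 336 / 25 * y ^ 3 + 53 / 5 * y ^ 4 + 24 / 5 * y ^ 5 + y ^ 6 := by
    simp only [indepPoly_T1, eval_add, eval_mul, eval_pow, eval_one, eval_X]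
    ring
  rw [htaylor]
  positivity

lemma eval_indepPoly_T2_pos {x : ℝ} (hx : -1 / 10 < x) : 0 < (indepPoly T2).eval x := by
  obtain ⟨y, hy, rfl⟩ : ∃ y, 0 < y ∧ x = y - 1 / 10 := ⟨x + 1 / 10, by linarith, by ring⟩
  have htaylor : (indepPoly T2).eval (y - 1 / 10) = 3879 / 10000 + 2227 / 500 * y +
      366 / 25 * y ^ 2 + 97 / 5 * y ^ 3 + 9 * y ^ 4 := by
    simp only [indepPoly_T2, eval_add, eval_mul, eval_pow, eval_one, eval_X]
    ring
  rw [htaylor]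
  positivity

lemma xi_T1_le : xi T1 ≤ -1 / 5 :=
  xi_le_of_eval_pos (b := -1 / 4) (by norm_num [indepPoly_T1]) fun _ => eval_indepPoly_T1_pos

lemma xi_T2_le : xi T2 ≤ -1 / 10 :=
  xi_le_of_eval_pos (b := -1) (by norm_num [indepPoly_T2]) fun _ => eval_indepPoly_T2_pos

end Trees

/-- `T₁` and `T₂` are incomparable with respect to `⪯`. -/
theorem stmt16 : ¬ Pre T1 T2 ∧ ¬ Pre T2 T1 := by
  constructor
  · have hlt : (indepPoly T1).eval (-1 / 10) < (indepPoly T2).eval (-1 / 10) := by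
      rw [← sub_neg, eval_indepPoly_T1_sub_T2]
      norm_num
    exact not_pre_of_eval_lt xi_T2_le (by norm_num) hlt
  · have hlt : (indepPoly T2).eval (-1 / 5) < (indepPoly T1).eval (-1 / 5) := by
      rw [← sub_pos, eval_indepPoly_T1_sub_T2]
      norm_num
    exact not_pre_of_eval_lt xi_T1_le (by norm_num) hlt
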